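/- Let X be a real normed linear space, let p < 1, and let x, y ∈ X be nonzero. Write m = min{‖x‖,‖y‖}, M = max{‖x‖,‖y‖}, and Δ = |‖x‖^{p−1} − ‖y‖^{p−1}|. Then the following chain holds: ‖x−y‖·M^{p−1} − Δ·m ≤ ‖x−y‖·m^{p−1} − Δ·M = ‖x‖^p + ‖y‖^p − (‖x‖+‖y‖−‖x−y‖)·m^{p−1} ≤ α_p[x,y] ≤ ‖x‖^p + ‖y‖^p − (‖x‖+‖y‖−‖x−y‖)·M^{p−1} ≤ ‖x−y‖·M^{p−1} + Δ·M ≤ ‖x−y‖·m^{p−1} + Δ·m. -/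

import Mathlib

noncomputable def alphaD {X : Type*} [NormedAddCommGroup X] [NormedSpace ℝ X]
    (p : ℝ) (x y : X) : ℝ :=
  ‖(‖x‖ ^ (p - 1)) • x - (‖y‖ ^ (p - 1)) • y‖

/-!
Writing `a = ‖x‖ ^ (p - 1)` and `b = ‖y‖ ^ (p - 1)`, the two decompositions
`a • x - b • y = a • (x - y) + (a - b) • y = b • (x - y) + (a - b) • x`
bound `‖a • x - b • y‖` from below and from above. For `p < 1` the larger weight belongs to the
shorter vector, so if `‖x‖ ≤ ‖y‖` the outer inequalities of the chain are
`(a - b) * ‖x‖ ≤ (a - b) * ‖y‖ ≤ (a - b) * (‖x‖ + ‖x - y‖)`.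
-/

section WeightedDifference

variable {R E : Type*} [SeminormedRing R] [SeminormedAddCommGroup E] [Module R E]

theorem norm_smul_sub_smul_le [IsBoundedSMul R E] (a b : R) (x y : E) :
    ‖a • x - b • y‖ ≤ ‖b‖ * ‖x - y‖ + ‖a - b‖ * ‖x‖ :=
  calc
    ‖a • x - b • y‖ = ‖b • (x - y) + (a - b) • x‖ := by rw [smul_sub, sub_smul]; abel_nf
    _ ≤ ‖b‖ * ‖x - y‖ + ‖a - b‖ * ‖x‖ :=
      norm_add_le_of_le (norm_smul_le _ _) (norm_smul_le _ _)

theorem le_norm_smul_sub_smul [NormSMulClass R E] (a b : R) (x y : E) :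
    ‖a‖ * ‖x - y‖ - ‖a - b‖ * ‖y‖ ≤ ‖a • x - b • y‖ :=
  calc
    ‖a‖ * ‖x - y‖ - ‖a - b‖ * ‖y‖ = ‖a • (x - y)‖ - ‖(a - b) • y‖ := by simp only [norm_smul]
    _ ≤ ‖a • (x - y) + (a - b) • y‖ := norm_sub_le_norm_add _ _
    _ = ‖a • x - b • y‖ := by rw [smul_sub, sub_smul]; abel_nf

end WeightedDifference

section AngularDistance

variable {X : Type*} [NormedAddCommGroup X] [NormedSpace ℝ X] (p : ℝ) (x y : X)

theorem alphaD_comm : alphaD p x y = alphaD p y x :=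
  norm_sub_rev _ _

theorem alphaD_le :
    alphaD p x y ≤ ‖x - y‖ * ‖y‖ ^ (p - 1) + |‖x‖ ^ (p - 1) - ‖y‖ ^ (p - 1)| * ‖x‖ := by
  have h := norm_smul_sub_smul_le (‖x‖ ^ (p - 1)) (‖y‖ ^ (p - 1)) x y
  rwa [Real.norm_rpow_of_nonneg (norm_nonneg y), norm_norm, Real.norm_eq_abs,
    mul_comm _ ‖x - y‖] at h

theorem le_alphaD :
    ‖x - y‖ * ‖x‖ ^ (p - 1) - |‖x‖ ^ (p - 1) - ‖y‖ ^ (p - 1)| * ‖y‖ ≤ alphaD p x y := by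
  have h := le_norm_smul_sub_smul (‖x‖ ^ (p - 1)) (‖y‖ ^ (p - 1)) x y
  rwa [Real.norm_rpow_of_nonneg (norm_nonneg x), norm_norm, Real.norm_eq_abs,
    mul_comm _ ‖x - y‖] at h

end AngularDistance

theorem rpow_add_rpow_sub_mul_rpow_sub_one {u v : ℝ} (hu : u ≠ 0) (hv : v ≠ 0) (p d : ℝ) :
    u ^ p + v ^ p - (u + v - d) * u ^ (p - 1)
      = d * u ^ (p - 1) - (u ^ (p - 1) - v ^ (p - 1)) * v := by
  have rpow_eq {t : ℝ} (ht : t ≠ 0) : t ^ p = t ^ (p - 1) * t := by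
    rw [← Real.rpow_add_one ht, sub_add_cancel]
  rw [rpow_eq hu, rpow_eq hv]
  ring

theorem pAngular_bound_chain_p_lt_one
    {X : Type*} [NormedAddCommGroup X] [NormedSpace ℝ X]
    (p : ℝ) (hp : p < 1) (x y : X) (hx : x ≠ 0) (hy : y ≠ 0)
    (m M Δ : ℝ) (hm : m = min ‖x‖ ‖y‖) (hM : M = max ‖x‖ ‖y‖)
    (hΔ : Δ = |‖x‖ ^ (p - 1) - ‖y‖ ^ (p - 1)|) :
    ‖x - y‖ * M ^ (p - 1) - Δ * m ≤ ‖x - y‖ * m ^ (p - 1) - Δ * M ∧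
    ‖x - y‖ * m ^ (p - 1) - Δ * M
        = ‖x‖ ^ p + ‖y‖ ^ p - (‖x‖ + ‖y‖ - ‖x - y‖) * m ^ (p - 1) ∧
    ‖x‖ ^ p + ‖y‖ ^ p - (‖x‖ + ‖y‖ - ‖x - y‖) * m ^ (p - 1) ≤ alphaD p x y ∧
    alphaD p x y ≤ ‖x‖ ^ p + ‖y‖ ^ p - (‖x‖ + ‖y‖ - ‖x - y‖) * M ^ (p - 1) ∧
    ‖x‖ ^ p + ‖y‖ ^ p - (‖x‖ + ‖y‖ - ‖x - y‖) * M ^ (p - 1)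
        ≤ ‖x - y‖ * M ^ (p - 1) + Δ * M ∧
    ‖x - y‖ * M ^ (p - 1) + Δ * M ≤ ‖x - y‖ * m ^ (p - 1) + Δ * m := by
  wlog hxy : ‖x‖ ≤ ‖y‖ generalizing x y
  · rw [norm_sub_rev x y, alphaD_comm p x y, add_comm (‖x‖ ^ p), add_comm ‖x‖ ‖y‖]
    exact this y x hy hx (by rw [hm, min_comm]) (by rw [hM, max_comm])
      (by rw [hΔ, abs_sub_comm]) (le_of_not_ge hxy)
  obtain rfl : m = ‖x‖ := hm.trans (min_eq_left hxy)
  obtain rfl : M = ‖y‖ := hM.trans (max_eq_right hxy)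
  have hweight : 0 ≤ ‖x‖ ^ (p - 1) - ‖y‖ ^ (p - 1) := sub_nonneg.mpr <|
    Real.rpow_le_rpow_of_nonpos (norm_pos_iff.mpr hx) hxy (sub_nonpos.mpr hp.le)
  have lower_le := hΔ ▸ le_alphaD p x y
  have le_upper := hΔ ▸ alphaD_le p x y
  obtain rfl : Δ = ‖x‖ ^ (p - 1) - ‖y‖ ^ (p - 1) := hΔ.trans (abs_of_nonneg hweight)
  have hx' := norm_ne_zero_iff.mpr hx
  have hy' := norm_ne_zero_iff.mpr hy
  have lower_eq := rpow_add_rpow_sub_mul_rpow_sub_one hx' hy' p ‖x - y‖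
  have upper_eq : ‖x‖ ^ p + ‖y‖ ^ p - (‖x‖ + ‖y‖ - ‖x - y‖) * ‖y‖ ^ (p - 1)
      = ‖x - y‖ * ‖y‖ ^ (p - 1) + (‖x‖ ^ (p - 1) - ‖y‖ ^ (p - 1)) * ‖x‖ := by
    linear_combination rpow_add_rpow_sub_mul_rpow_sub_one hy' hx' p ‖x - y‖
  have outer_le := mul_le_mul_of_nonneg_left (norm_le_norm_add_norm_sub x y) hweight
  exact ⟨by linarith, lower_eq.symm, lower_eq.trans_le lower_le, le_upper.trans_eq upper_eq.symm,
    upper_eq.trans_le (by gcongr), by linarith⟩
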